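/- arXiv:1606.09141 — 2 statements merged into one kernel-verified Lean document; each statement's English description precedes it below -/
import Mathlib

section
/- Minimal quintic cones in ℝ^{4n+2}: let n ≥ 1, and on ℝ^{4n+2} (coordinates x₁,y₁,…,x_{2n+1},y_{2n+1}) set T₁ = Σ_{j=1}^{n}(xⱼ² − yⱼ²), T₂ = Σ_{j=1}^{n} 2xⱼyⱼ, S₁ = Σ_{j=n+1}^{2n}(xⱼ² − yⱼ²), S₂ = Σ_{j=n+1}^{2n} 2xⱼyⱼ. The quintic polynomial P = y_{2n+1}·(T₁S₁ − T₂S₂) − x_{2n+1}·(T₂S₁ + T₁S₂) satisfies ‖∇P‖²·ΔP − Δ_∞P = 0 at every point of {P = 0} where ∇P ≠ 0; hence {y_{2n+1}(T₁S₁ − T₂S₂) = x_{2n+1}(T₂S₁ + T₁S₂)} is a minimal quintic cone in ℝ^{4n+2}. -/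
/-!
Put `u = x_{2n+1} + i·y_{2n+1}`, `T = T₁ + i·T₂ = Σ wⱼ²` over the first block of `n` complex
coordinates and `S = S₁ + i·S₂` likewise over the second block. Then `P = -Im(ū·T·S)`, so after the
isometry `u ↦ ū` it is the imaginary part, up to sign, of the holomorphic function `f = u·T·S`.
Hence `ΔP = 0` (`lap_QuinticP`). Moreover `Δ_∞P` is then, up to sign, the imaginary part of
`Σ f_{kl}·conj(f_k)·conj(f_l)`, and each group of terms of that sum is a real multiple of `conj f`;
so `Δ_∞P` is a multiple of `P` (`infLap_QuinticP`) and vanishes on `{P = 0}`.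

The computation is carried out in real coordinates. As `Δ_∞P` is the Hessian of `P` evaluated twice
on the gradient `v`, only the values and polar forms of the quadratic forms `T₁, T₂, S₁, S₂` at `z`
and `v` enter, and these are given by `block_grad`.
-/

noncomputable section

variable {ι : Type*} [Fintype ι] [DecidableEq ι]

/-- The `i`-th partial derivative `∂F/∂zᵢ` of `F : ℝ^ι → ℝ` at `x`. -/
def pd (F : EuclideanSpace ℝ ι → ℝ) (x : EuclideanSpace ℝ ι) (i : ι) : ℝ :=
  fderiv ℝ F x (EuclideanSpace.single i 1)

/-- The Laplacian `ΔF = Σᵢ ∂²F/∂zᵢ²` at `x`. -/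
def lap (F : EuclideanSpace ℝ ι → ℝ) (x : EuclideanSpace ℝ ι) : ℝ :=
  ∑ i, fderiv ℝ (fun y => pd F y i) x (EuclideanSpace.single i 1)

/-- The infinity-Laplacian `Δ_∞F = Σ_{i,j} (∂F/∂zᵢ)(∂F/∂zⱼ)(∂²F/∂zᵢ∂zⱼ)` at `x`. -/
def infLap (F : EuclideanSpace ℝ ι → ℝ) (x : EuclideanSpace ℝ ι) : ℝ :=
  ∑ i, ∑ j, pd F x i * pd F x j * fderiv ℝ (fun y => pd F y i) x (EuclideanSpace.single j 1)

/-- The squared norm `‖∇F‖²` of the gradient of `F` at `x`. -/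
def gradSq (F : EuclideanSpace ℝ ι → ℝ) (x : EuclideanSpace ℝ ι) : ℝ :=
  ∑ i, (pd F x i) ^ 2

/-- `T₁ = Σ_{j=1}^{n} (xⱼ² − yⱼ²)` on `ℝ^{4n+2}`, with `xⱼ = z (inl j)`, `yⱼ = z (inr j)`,
indices `j = 0,…,2n` in `Fin (2n+1)`. -/
def T1 (n : ℕ) (z : EuclideanSpace ℝ (Fin (2 * n + 1) ⊕ Fin (2 * n + 1))) : ℝ :=
  ∑ j : Fin n, ((z (Sum.inl ⟨j.1, by omega⟩)) ^ 2 - (z (Sum.inr ⟨j.1, by omega⟩)) ^ 2)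

/-- `T₂ = Σ_{j=1}^{n} 2xⱼyⱼ` on `ℝ^{4n+2}`. -/
def T2 (n : ℕ) (z : EuclideanSpace ℝ (Fin (2 * n + 1) ⊕ Fin (2 * n + 1))) : ℝ :=
  ∑ j : Fin n, 2 * z (Sum.inl ⟨j.1, by omega⟩) * z (Sum.inr ⟨j.1, by omega⟩)

/-- `S₁ = Σ_{j=n+1}^{2n} (xⱼ² − yⱼ²)` on `ℝ^{4n+2}`. -/
def S1 (n : ℕ) (z : EuclideanSpace ℝ (Fin (2 * n + 1) ⊕ Fin (2 * n + 1))) : ℝ :=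
  ∑ j : Fin n, ((z (Sum.inl ⟨n + j.1, by omega⟩)) ^ 2 - (z (Sum.inr ⟨n + j.1, by omega⟩)) ^ 2)

/-- `S₂ = Σ_{j=n+1}^{2n} 2xⱼyⱼ` on `ℝ^{4n+2}`. -/
def S2 (n : ℕ) (z : EuclideanSpace ℝ (Fin (2 * n + 1) ⊕ Fin (2 * n + 1))) : ℝ :=
  ∑ j : Fin n, 2 * z (Sum.inl ⟨n + j.1, by omega⟩) * z (Sum.inr ⟨n + j.1, by omega⟩)

/-- The quintic `P = y_{2n+1}·(T₁S₁ − T₂S₂) − x_{2n+1}·(T₂S₁ + T₁S₂)`. -/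
def QuinticP (n : ℕ) (z : EuclideanSpace ℝ (Fin (2 * n + 1) ⊕ Fin (2 * n + 1))) : ℝ :=
  z (Sum.inr (Fin.last (2 * n))) * (T1 n z * S1 n z - T2 n z * S2 n z) -
    z (Sum.inl (Fin.last (2 * n))) * (T2 n z * S1 n z + T1 n z * S2 n z)

/-! ### Block quadratic forms and their derivatives -/

/-- The coordinate space `ℝ^{4n+2}`. -/
abbrev E (n : ℕ) := EuclideanSpace ℝ (Fin (2 * n + 1) ⊕ Fin (2 * n + 1))

/-- The `j`-th index of the block on which `T₁, T₂` depend. -/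
def tI (n : ℕ) (j : Fin n) : Fin (2 * n + 1) := ⟨j.1, by omega⟩

/-- The `j`-th index of the block on which `S₁, S₂` depend. -/
def sI (n : ℕ) (j : Fin n) : Fin (2 * n + 1) := ⟨n + j.1, by omega⟩

/-- `Re Σ wⱼ²` for `wⱼ = x_{b j} + i·y_{b j}`; it is `T₁` for the block `b = tI` and `S₁` for
`b = sI`. -/
def Q1 (n : ℕ) (b : Fin n → Fin (2 * n + 1)) (z : E n) : ℝ :=
  ∑ j, ((z (Sum.inl (b j))) ^ 2 - (z (Sum.inr (b j))) ^ 2)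

/-- `Im Σ wⱼ²` for `wⱼ = x_{b j} + i·y_{b j}`. -/
def Q2 (n : ℕ) (b : Fin n → Fin (2 * n + 1)) (z : E n) : ℝ :=
  ∑ j, 2 * z (Sum.inl (b j)) * z (Sum.inr (b j))

/-- `Σ |wⱼ|²` for `wⱼ = x_{b j} + i·y_{b j}`. -/
def N (n : ℕ) (b : Fin n → Fin (2 * n + 1)) (z : E n) : ℝ :=
  ∑ j, ((z (Sum.inl (b j))) ^ 2 + (z (Sum.inr (b j))) ^ 2)

/-- The polar form of `Q1`, so that the derivative of `Q1` at `z` is `dQ1 n b z`. -/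
def dQ1 (n : ℕ) (b : Fin n → Fin (2 * n + 1)) (z : E n) : E n →L[ℝ] ℝ :=
  ∑ j, ((2 * z (Sum.inl (b j))) • EuclideanSpace.proj (𝕜 := ℝ) (Sum.inl (b j))
    - (2 * z (Sum.inr (b j))) • EuclideanSpace.proj (𝕜 := ℝ) (Sum.inr (b j)))

/-- The polar form of `Q2`, so that the derivative of `Q2` at `z` is `dQ2 n b z`. -/
def dQ2 (n : ℕ) (b : Fin n → Fin (2 * n + 1)) (z : E n) : E n →L[ℝ] ℝ :=
  ∑ j, ((2 * z (Sum.inl (b j))) • EuclideanSpace.proj (𝕜 := ℝ) (Sum.inr (b j))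
    + (2 * z (Sum.inr (b j))) • EuclideanSpace.proj (𝕜 := ℝ) (Sum.inl (b j)))

lemma dQ1_apply (n : ℕ) (b : Fin n → Fin (2 * n + 1)) (z v : E n) :
    dQ1 n b z v = ∑ j, (2 * z (Sum.inl (b j)) * v (Sum.inl (b j))
      - 2 * z (Sum.inr (b j)) * v (Sum.inr (b j))) := by
  simp [dQ1]

lemma dQ2_apply (n : ℕ) (b : Fin n → Fin (2 * n + 1)) (z v : E n) :
    dQ2 n b z v = ∑ j, (2 * z (Sum.inl (b j)) * v (Sum.inr (b j))
      + 2 * z (Sum.inr (b j)) * v (Sum.inl (b j))) := by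
  simp [dQ2]

lemma hasFDerivAt_coord {n : ℕ} (i : Fin (2 * n + 1) ⊕ Fin (2 * n + 1)) (z : E n) :
    HasFDerivAt (fun z : E n => z i) (EuclideanSpace.proj (𝕜 := ℝ) i) z :=
  (EuclideanSpace.proj (𝕜 := ℝ) i : E n →L[ℝ] ℝ).hasFDerivAt

lemma hasFDerivAt_Q1 (n : ℕ) (b : Fin n → Fin (2 * n + 1)) (z : E n) :
    HasFDerivAt (Q1 n b) (dQ1 n b z) z := by
  unfold Q1 dQ1
  refine HasFDerivAt.fun_sum fun j _ => ?_
  refine (((hasFDerivAt_coord (Sum.inl (b j)) z).pow 2).sub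
    ((hasFDerivAt_coord (Sum.inr (b j)) z).pow 2)).congr_fderiv ?_
  ext v; simp

lemma hasFDerivAt_Q2 (n : ℕ) (b : Fin n → Fin (2 * n + 1)) (z : E n) :
    HasFDerivAt (Q2 n b) (dQ2 n b z) z := by
  unfold Q2 dQ2
  refine HasFDerivAt.fun_sum fun j _ => ?_
  refine (((hasFDerivAt_coord (Sum.inl (b j)) z).const_mul 2).mul
    (hasFDerivAt_coord (Sum.inr (b j)) z)).congr_fderiv ?_
  ext v; simp; ring

/-- With `u = x_{2n+1} + i·y_{2n+1}` and `q = Σ wⱼ²` over the block `b`, the number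
`y·Q1 - x·Q2 = -Im(ū·q)`. -/
def cf (n : ℕ) (b : Fin n → Fin (2 * n + 1)) (z : E n) : ℝ :=
  z (Sum.inr (Fin.last (2 * n))) * Q1 n b z - z (Sum.inl (Fin.last (2 * n))) * Q2 n b z

/-- `y·Q2 + x·Q1 = Re(ū·q)`. -/
def df (n : ℕ) (b : Fin n → Fin (2 * n + 1)) (z : E n) : ℝ :=
  z (Sum.inr (Fin.last (2 * n))) * Q2 n b z + z (Sum.inl (Fin.last (2 * n))) * Q1 n b z

/-- The directional derivative of `cf` at `z` along `v`. -/
def dcf (n : ℕ) (b : Fin n → Fin (2 * n + 1)) (z v : E n) : ℝ :=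
  v (Sum.inr (Fin.last (2 * n))) * Q1 n b z + z (Sum.inr (Fin.last (2 * n))) * dQ1 n b z v
  - v (Sum.inl (Fin.last (2 * n))) * Q2 n b z - z (Sum.inl (Fin.last (2 * n))) * dQ2 n b z v

/-- The directional derivative of `df` at `z` along `v`. -/
def ddf (n : ℕ) (b : Fin n → Fin (2 * n + 1)) (z v : E n) : ℝ :=
  v (Sum.inr (Fin.last (2 * n))) * Q2 n b z + z (Sum.inr (Fin.last (2 * n))) * dQ2 n b z v
  + v (Sum.inl (Fin.last (2 * n))) * Q1 n b z + z (Sum.inl (Fin.last (2 * n))) * dQ1 n b z v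

lemma QuinticP_eq (n : ℕ) : QuinticP n = fun z =>
    z (Sum.inr (Fin.last (2 * n))) *
      (Q1 n (tI n) z * Q1 n (sI n) z - Q2 n (tI n) z * Q2 n (sI n) z) -
    z (Sum.inl (Fin.last (2 * n))) *
      (Q2 n (tI n) z * Q1 n (sI n) z + Q1 n (tI n) z * Q2 n (sI n) z) := rfl

lemma fderiv_QuinticP (n : ℕ) (z v : E n) : fderiv ℝ (QuinticP n) z v =
    v (Sum.inr (Fin.last (2 * n))) *
      (Q1 n (tI n) z * Q1 n (sI n) z - Q2 n (tI n) z * Q2 n (sI n) z) -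
    v (Sum.inl (Fin.last (2 * n))) *
      (Q2 n (tI n) z * Q1 n (sI n) z + Q1 n (tI n) z * Q2 n (sI n) z) +
    dQ1 n (tI n) z v * cf n (sI n) z - dQ2 n (tI n) z v * df n (sI n) z +
    dQ1 n (sI n) z v * cf n (tI n) z - dQ2 n (sI n) z v * df n (tI n) z := by
  have hx := hasFDerivAt_coord (Sum.inl (Fin.last (2 * n))) z
  have hy := hasFDerivAt_coord (Sum.inr (Fin.last (2 * n))) z
  have t1 := hasFDerivAt_Q1 n (tI n) z
  have t2 := hasFDerivAt_Q2 n (tI n) z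
  have s1 := hasFDerivAt_Q1 n (sI n) z
  have s2 := hasFDerivAt_Q2 n (sI n) z
  have h := (hy.mul ((t1.mul s1).sub (t2.mul s2))).sub (hx.mul ((t2.mul s1).add (t1.mul s2)))
  have h' : HasFDerivAt (QuinticP n) _ z := h
  rw [h'.fderiv]
  simp [cf, df]
  ring

/-! ### Splitting the coordinates into blocks -/

lemma tI_inj {n : ℕ} {j k : Fin n} : tI n j = tI n k ↔ j = k := by
  simp [tI, Fin.ext_iff]
lemma sI_inj {n : ℕ} {j k : Fin n} : sI n j = sI n k ↔ j = k := by
  simp [sI, Fin.ext_iff]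
lemma tI_ne_sI {n : ℕ} {j k : Fin n} : tI n j ≠ sI n k := by
  simp only [tI, sI, ne_eq, Fin.ext_iff]; omega
lemma sI_ne_tI {n : ℕ} {j k : Fin n} : sI n j ≠ tI n k := tI_ne_sI.symm
lemma tI_ne_last {n : ℕ} {j : Fin n} : tI n j ≠ Fin.last (2 * n) := by
  simp only [tI, ne_eq, Fin.ext_iff, Fin.val_last]; omega
lemma sI_ne_last {n : ℕ} {j : Fin n} : sI n j ≠ Fin.last (2 * n) := by
  simp only [sI, ne_eq, Fin.ext_iff, Fin.val_last]; omega

lemma sum_blocks (n : ℕ) (f : Fin (2 * n + 1) ⊕ Fin (2 * n + 1) → ℝ) :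
    ∑ i, f i = ∑ j, (f (Sum.inl (tI n j)) + f (Sum.inr (tI n j)))
      + ∑ j, (f (Sum.inl (sI n j)) + f (Sum.inr (sI n j)))
      + (f (Sum.inl (Fin.last (2 * n))) + f (Sum.inr (Fin.last (2 * n)))) := by
  have key : ∀ g : Fin (2 * n + 1) → ℝ,
      ∑ i, g i = ∑ j, g (tI n j) + ∑ j, g (sI n j) + g (Fin.last (2 * n)) := by
    intro g
    rw [Fin.sum_univ_castSucc]
    congr 1
    rw [← Equiv.sum_comp (finCongr (two_mul n).symm), Fin.sum_univ_add]
    rfl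
  rw [Fintype.sum_sum_type, key, key]
  simp only [Finset.sum_add_distrib]
  ring

/-! ### First partial derivatives -/

section Gradient
variable (n : ℕ) (z : E n)

lemma pd_xl : pd (QuinticP n) z (Sum.inl (Fin.last (2 * n))) =
    -(Q2 n (tI n) z * Q1 n (sI n) z + Q1 n (tI n) z * Q2 n (sI n) z) := by
  simp [pd, fderiv_QuinticP, dQ1_apply, dQ2_apply, tI_ne_last, sI_ne_last]

lemma pd_yl : pd (QuinticP n) z (Sum.inr (Fin.last (2 * n))) =
    Q1 n (tI n) z * Q1 n (sI n) z - Q2 n (tI n) z * Q2 n (sI n) z := by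
  simp [pd, fderiv_QuinticP, dQ1_apply, dQ2_apply, tI_ne_last, sI_ne_last]

lemma pd_xt (j : Fin n) : pd (QuinticP n) z (Sum.inl (tI n j)) =
    2 * (z (Sum.inl (tI n j)) * cf n (sI n) z - z (Sum.inr (tI n j)) * df n (sI n) z) := by
  simp [pd, fderiv_QuinticP, dQ1_apply, dQ2_apply, tI_ne_last.symm, sI_ne_tI, tI_inj]
  ring

lemma pd_yt (j : Fin n) : pd (QuinticP n) z (Sum.inr (tI n j)) =
    -2 * (z (Sum.inr (tI n j)) * cf n (sI n) z + z (Sum.inl (tI n j)) * df n (sI n) z) := by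
  simp [pd, fderiv_QuinticP, dQ1_apply, dQ2_apply, tI_ne_last.symm, sI_ne_tI, tI_inj]
  ring

lemma pd_xs (j : Fin n) : pd (QuinticP n) z (Sum.inl (sI n j)) =
    2 * (z (Sum.inl (sI n j)) * cf n (tI n) z - z (Sum.inr (sI n j)) * df n (tI n) z) := by
  simp [pd, fderiv_QuinticP, dQ1_apply, dQ2_apply, sI_ne_last.symm, tI_ne_sI, sI_inj]
  ring

lemma pd_ys (j : Fin n) : pd (QuinticP n) z (Sum.inr (sI n j)) =
    -2 * (z (Sum.inr (sI n j)) * cf n (tI n) z + z (Sum.inl (sI n j)) * df n (tI n) z) := by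
  simp [pd, fderiv_QuinticP, dQ1_apply, dQ2_apply, sI_ne_last.symm, tI_ne_sI, sI_inj]
  ring

end Gradient

/-! ### Second derivatives -/

section Hessian
variable (n : ℕ) (z v : E n)

lemma hasFDerivAt_cf (b : Fin n → Fin (2 * n + 1)) :
    ∃ L : E n →L[ℝ] ℝ, HasFDerivAt (cf n b) L z ∧ ∀ v, L v = dcf n b z v := by
  refine ⟨_, ((hasFDerivAt_coord (Sum.inr (Fin.last (2 * n))) z).mul (hasFDerivAt_Q1 n b z)).sub
    ((hasFDerivAt_coord (Sum.inl (Fin.last (2 * n))) z).mul (hasFDerivAt_Q2 n b z)), fun v => ?_⟩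
  simp [dcf]; ring

lemma hasFDerivAt_df (b : Fin n → Fin (2 * n + 1)) :
    ∃ L : E n →L[ℝ] ℝ, HasFDerivAt (df n b) L z ∧ ∀ v, L v = ddf n b z v := by
  refine ⟨_, ((hasFDerivAt_coord (Sum.inr (Fin.last (2 * n))) z).mul (hasFDerivAt_Q2 n b z)).add
    ((hasFDerivAt_coord (Sum.inl (Fin.last (2 * n))) z).mul (hasFDerivAt_Q1 n b z)), fun v => ?_⟩
  simp [ddf]; ring

lemma fderiv_block_x (b : Fin n → Fin (2 * n + 1)) (i : Fin (2 * n + 1)) :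
    fderiv ℝ (fun z : E n => 2 * (z (Sum.inl i) * cf n b z - z (Sum.inr i) * df n b z)) z v =
      2 * (v (Sum.inl i) * cf n b z + z (Sum.inl i) * dcf n b z v
        - v (Sum.inr i) * df n b z - z (Sum.inr i) * ddf n b z v) := by
  obtain ⟨L, hL, hL'⟩ := hasFDerivAt_cf n z b
  obtain ⟨M, hM, hM'⟩ := hasFDerivAt_df n z b
  have h := (((hasFDerivAt_coord (Sum.inl i) z).mul hL).sub
    ((hasFDerivAt_coord (Sum.inr i) z).mul hM)).const_mul 2
  refine (DFunLike.congr_fun (HasFDerivAt.fderiv h) v).trans ?_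
  simp [hL', hM']; ring

lemma fderiv_block_y (b : Fin n → Fin (2 * n + 1)) (i : Fin (2 * n + 1)) :
    fderiv ℝ (fun z : E n => -2 * (z (Sum.inr i) * cf n b z + z (Sum.inl i) * df n b z)) z v =
      -2 * (v (Sum.inr i) * cf n b z + z (Sum.inr i) * dcf n b z v
        + v (Sum.inl i) * df n b z + z (Sum.inl i) * ddf n b z v) := by
  obtain ⟨L, hL, hL'⟩ := hasFDerivAt_cf n z b
  obtain ⟨M, hM, hM'⟩ := hasFDerivAt_df n z b
  have h := (((hasFDerivAt_coord (Sum.inr i) z).mul hL).add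
    ((hasFDerivAt_coord (Sum.inl i) z).mul hM)).const_mul (-2)
  refine (DFunLike.congr_fun (HasFDerivAt.fderiv h) v).trans ?_
  simp [hL', hM']; ring

lemma hess_xl : fderiv ℝ (fun y => pd (QuinticP n) y (Sum.inl (Fin.last (2 * n)))) z v =
    -(dQ2 n (tI n) z v * Q1 n (sI n) z + Q2 n (tI n) z * dQ1 n (sI n) z v
      + dQ1 n (tI n) z v * Q2 n (sI n) z + Q1 n (tI n) z * dQ2 n (sI n) z v) := by
  simp only [pd_xl]
  have h := (((hasFDerivAt_Q2 n (tI n) z).mul (hasFDerivAt_Q1 n (sI n) z)).add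
    ((hasFDerivAt_Q1 n (tI n) z).mul (hasFDerivAt_Q2 n (sI n) z))).neg
  refine (DFunLike.congr_fun (HasFDerivAt.fderiv h) v).trans ?_
  simp; ring

lemma hess_yl : fderiv ℝ (fun y => pd (QuinticP n) y (Sum.inr (Fin.last (2 * n)))) z v =
    dQ1 n (tI n) z v * Q1 n (sI n) z + Q1 n (tI n) z * dQ1 n (sI n) z v
      - dQ2 n (tI n) z v * Q2 n (sI n) z - Q2 n (tI n) z * dQ2 n (sI n) z v := by
  simp only [pd_yl]
  have h := (((hasFDerivAt_Q1 n (tI n) z).mul (hasFDerivAt_Q1 n (sI n) z)).sub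
    ((hasFDerivAt_Q2 n (tI n) z).mul (hasFDerivAt_Q2 n (sI n) z)))
  refine (DFunLike.congr_fun (HasFDerivAt.fderiv h) v).trans ?_
  simp; ring

end Hessian

/-! ### The Laplacian and the infinity-Laplacian -/

/-- `P` is harmonic: up to the reflection `y_{2n+1} ↦ -y_{2n+1}` it is the imaginary part of a
holomorphic function. -/
lemma lap_QuinticP (n : ℕ) (z : E n) : lap (QuinticP n) z = 0 := by
  unfold lap
  rw [sum_blocks]
  simp only [hess_xl, hess_yl]
  simp only [pd_xt, pd_yt, pd_xs, pd_ys, fderiv_block_x, fderiv_block_y]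
  simp [dcf, ddf, dQ1_apply, dQ2_apply, tI_ne_last, sI_ne_last, tI_ne_last.symm, sI_ne_last.symm,
    sI_ne_tI, tI_ne_sI]

lemma fderiv_eq_sum {n : ℕ} (L : E n →L[ℝ] ℝ) (v : E n) :
    ∑ j, v j * L (EuclideanSpace.single j 1) = L v := by
  conv_rhs => rw [← (EuclideanSpace.basisFun _ ℝ).sum_repr v]
  simp [map_sum]

/-- The contribution of one block to the second derivative of `P` along `v`. -/
lemma block_sum (n : ℕ) (b : Fin n → Fin (2 * n + 1)) (z v : E n) (C D c d : ℝ) :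
    ∑ j, (v (Sum.inl (b j)) * (2 * (v (Sum.inl (b j)) * C + z (Sum.inl (b j)) * c
        - v (Sum.inr (b j)) * D - z (Sum.inr (b j)) * d))
      + v (Sum.inr (b j)) * (-2 * (v (Sum.inr (b j)) * C + z (Sum.inr (b j)) * c
        + v (Sum.inl (b j)) * D + z (Sum.inl (b j)) * d)))
    = 2 * C * Q1 n b v - 2 * D * Q2 n b v + c * dQ1 n b z v - d * dQ2 n b z v := by
  rw [dQ1_apply, dQ2_apply, Q1, Q2]
  simp only [Finset.mul_sum, ← Finset.sum_add_distrib, ← Finset.sum_sub_distrib]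
  exact Finset.sum_congr rfl fun j _ => by ring

/-- The four block quantities evaluated along a vector `v` whose block components are those of the
gradient of `P`, namely `v_w = 2·conj(w·(C + i·D))`. -/
lemma block_grad (n : ℕ) (b : Fin n → Fin (2 * n + 1)) (z v : E n) (C D : ℝ)
    (hx : ∀ j, v (Sum.inl (b j)) = 2 * (z (Sum.inl (b j)) * C - z (Sum.inr (b j)) * D))
    (hy : ∀ j, v (Sum.inr (b j)) = -2 * (z (Sum.inr (b j)) * C + z (Sum.inl (b j)) * D)) :
    Q1 n b v = 4 * ((C ^ 2 - D ^ 2) * Q1 n b z - 2 * C * D * Q2 n b z) ∧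
    Q2 n b v = -4 * ((C ^ 2 - D ^ 2) * Q2 n b z + 2 * C * D * Q1 n b z) ∧
    dQ1 n b z v = 4 * C * N n b z ∧ dQ2 n b z v = -4 * D * N n b z := by
  rw [dQ1_apply, dQ2_apply, Q1, Q2, Q1, Q2, N]
  simp only [hx, hy, Finset.mul_sum, ← Finset.sum_add_distrib, ← Finset.sum_sub_distrib]
  refine ⟨?_, ?_, ?_, ?_⟩ <;> exact Finset.sum_congr rfl fun j _ => by ring

/-- `Δ_∞P = k·P`. With `A = Σ|wⱼ|²` over the first block and `B` over the second, the factor is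
`k = 8|u|²(|S|² + |T|² + 4AB) + 8A|S|² + 8B|T|²`. -/
lemma infLap_QuinticP (n : ℕ) (z : E n) : ∃ k : ℝ, infLap (QuinticP n) z = k * QuinticP n z := by
  obtain ⟨v, hv⟩ : ∃ v : E n, ∀ i, pd (QuinticP n) z i = v i :=
    ⟨WithLp.toLp 2 fun i => pd (QuinticP n) z i, fun _ => rfl⟩
  have h1 : infLap (QuinticP n) z
      = ∑ i, v i * fderiv ℝ (fun y => pd (QuinticP n) y i) z v := by
    unfold infLap
    refine Finset.sum_congr rfl fun i _ => ?_
    rw [← fderiv_eq_sum, Finset.mul_sum]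
    exact Finset.sum_congr rfl fun j _ => by rw [hv, hv]; ring
  obtain ⟨t1, t2, t3, t4⟩ := block_grad n (tI n) z v (cf n (sI n) z) (df n (sI n) z)
    (fun j => by rw [← hv, pd_xt]) (fun j => by rw [← hv, pd_yt])
  obtain ⟨s1, s2, s3, s4⟩ := block_grad n (sI n) z v (cf n (tI n) z) (df n (tI n) z)
    (fun j => by rw [← hv, pd_xs]) (fun j => by rw [← hv, pd_ys])
  have vx := (hv (Sum.inl (Fin.last (2 * n)))).symm.trans (pd_xl n z)
  have vy := (hv (Sum.inr (Fin.last (2 * n)))).symm.trans (pd_yl n z)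
  rw [h1, sum_blocks]
  simp only [hess_xl, hess_yl]
  simp only [pd_xt, pd_yt, pd_xs, pd_ys, fderiv_block_x, fderiv_block_y]
  rw [block_sum, block_sum]
  simp only [dcf, ddf, t1, t2, t3, t4, s1, s2, s3, s4, vx, vy, QuinticP_eq, cf, df]
  generalize Q1 n (tI n) z = T1
  generalize Q2 n (tI n) z = T2
  generalize Q1 n (sI n) z = S1
  generalize Q2 n (sI n) z = S2
  generalize N n (tI n) z = A
  generalize N n (sI n) z = B
  generalize z (Sum.inl (Fin.last (2 * n))) = x
  generalize z (Sum.inr (Fin.last (2 * n))) = y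
  refine ⟨8 * (x ^ 2 + y ^ 2) * (S1 ^ 2 + S2 ^ 2) + 8 * (x ^ 2 + y ^ 2) * (T1 ^ 2 + T2 ^ 2)
    + 32 * (x ^ 2 + y ^ 2) * A * B + 8 * A * (S1 ^ 2 + S2 ^ 2) + 8 * B * (T1 ^ 2 + T2 ^ 2), ?_⟩
  ring

/-- the quintic `P = y_{2n+1}·(T₁S₁ − T₂S₂) − x_{2n+1}·(T₂S₁ + T₁S₂)`
satisfies `‖∇P‖²·ΔP − Δ_∞P = 0` at every point of `{P = 0}` with `∇P ≠ 0`; hence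
`{y_{2n+1}(T₁S₁ − T₂S₂) = x_{2n+1}(T₂S₁ + T₁S₂)}` is a minimal quintic cone in `ℝ^{4n+2}`. -/
theorem quintic_cone_minimal_4n2 (n : ℕ) (hn : 1 ≤ n)
    (z : EuclideanSpace ℝ (Fin (2 * n + 1) ⊕ Fin (2 * n + 1)))
    (hz : QuinticP n z = 0) (hgrad : ∃ i, pd (QuinticP n) z i ≠ 0) :
    gradSq (QuinticP n) z * lap (QuinticP n) z - infLap (QuinticP n) z = 0 := by
  obtain ⟨k, hk⟩ := infLap_QuinticP n z
  rw [lap_QuinticP, hk, hz]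
  simp
end
end

section
/- Lawson's algebraic minimal cones in ℝ^{2n}: let n ≥ 2 and let k₁,…,k_n be positive integers. The homogeneous polynomial P(x₁,y₁,…,x_n,y_n) = Im((x₁ + i·y₁)^{k₁} ⋯ (x_n + i·y_n)^{k_n}) of degree k₁+⋯+k_n satisfies ‖∇P‖²·ΔP − Δ_∞P = 0 at every point of {P = 0} where ∇P ≠ 0; hence {P = 0} is an algebraic minimal cone in ℝ^{2n}. In particular, for n = 3 and k₁ = k₂ = k₃ = 1, the cubic cone {y₁x₂x₃ + x₁y₂x₃ + x₁x₂y₃ − y₁y₂y₃ = 0} is minimal in ℝ⁶. -/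
/-!
Write `P = Im f` with `f = ∏ wⱼ ^ kⱼ` holomorphic in `wⱼ = xⱼ + i yⱼ`. Harmonicity gives `ΔP = 0`.
The gradient of `P`, read as a vector of complex numbers, is `i · conj (∂f/∂wⱼ)`, so
`Δ_∞P = -∑ⱼ ∑ₗ Im (fⱼₗ · conj fⱼ · conj fₗ)`, where the subscripts are complex derivatives
(`lawson_infLap_block` is the contribution of one pair `(j, l)`). Euler's relations
`wⱼ fⱼ = kⱼ f` and `wⱼ wₗ fⱼₗ = (integer) · f` make each summand a real multiple of `conj f` when
`wⱼ, wₗ ≠ 0`, hence real on `{Im f = 0}`; when `wⱼ` or `wₗ` vanishes, so does the summand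
(`lawson_term_im_eq_zero`).
-/

noncomputable section

variable {ι : Type*} [Fintype ι] [DecidableEq ι]

/-- `P = Im((x₁ + i·y₁)^{k₁} ⋯ (x_n + i·y_n)^{k_n})` on `ℝ^{2n}`, with `xⱼ = z (inl j)`,
`yⱼ = z (inr j)`. -/
def LawsonP (n : ℕ) (k : Fin n → ℕ) (z : EuclideanSpace ℝ (Fin n ⊕ Fin n)) : ℝ :=
  (∏ j : Fin n, ((z (Sum.inl j) : ℂ) + (z (Sum.inr j) : ℂ) * Complex.I) ^ (k j)).im

/-- The complex coordinate `wⱼ = xⱼ + i yⱼ`. -/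
def lawsonCoord {n : ℕ} (j : Fin n) (z : EuclideanSpace ℝ (Fin n ⊕ Fin n)) : ℂ :=
  (z (Sum.inl j) : ℂ) + (z (Sum.inr j) : ℂ) * Complex.I

/-- The monomial `∏ⱼ wⱼ ^ mⱼ`. -/
def lawsonMon {n : ℕ} (m : Fin n → ℕ) (z : EuclideanSpace ℝ (Fin n ⊕ Fin n)) : ℂ :=
  ∏ j, lawsonCoord j z ^ m j

/-- The exponent vector `m - eⱼ`, truncated at zero. -/
def lawsonLower {n : ℕ} (m : Fin n → ℕ) (j : Fin n) : Fin n → ℕ :=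
  Function.update m j (m j - 1)

/-- The complex partial derivative `∂/∂wⱼ` of the monomial with exponents `m`. -/
def lawsonD {n : ℕ} (m : Fin n → ℕ) (j : Fin n) (z : EuclideanSpace ℝ (Fin n ⊕ Fin n)) : ℂ :=
  m j * lawsonMon (lawsonLower m j) z

/-- The second complex partial derivative `∂²/∂wₗ∂wⱼ` of the monomial with exponents `m`. -/
def lawsonDD {n : ℕ} (m : Fin n → ℕ) (j l : Fin n) (z : EuclideanSpace ℝ (Fin n ⊕ Fin n)) : ℂ :=
  m j * lawsonD (lawsonLower m j) l z

/-- The complex coordinate `wⱼ` as a real-linear map. -/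
def lawsonCoordL {n : ℕ} (j : Fin n) : EuclideanSpace ℝ (Fin n ⊕ Fin n) →L[ℝ] ℂ :=
  Complex.ofRealCLM.comp (EuclideanSpace.proj (Sum.inl j)) +
    Complex.I • Complex.ofRealCLM.comp (EuclideanSpace.proj (Sum.inr j))

lemma lawsonCoordL_apply {n : ℕ} (j : Fin n) (z : EuclideanSpace ℝ (Fin n ⊕ Fin n)) :
    lawsonCoordL j z = lawsonCoord j z := by
  simp [lawsonCoordL, lawsonCoord, mul_comm]

lemma lawsonCoordL_single_inl {n : ℕ} (j l : Fin n) :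
    lawsonCoordL j (EuclideanSpace.single (Sum.inl l) 1) = if j = l then 1 else 0 := by
  by_cases h : j = l <;> simp [lawsonCoordL_apply, lawsonCoord, h]

lemma lawsonCoordL_single_inr {n : ℕ} (j l : Fin n) :
    lawsonCoordL j (EuclideanSpace.single (Sum.inr l) 1) = if j = l then Complex.I else 0 := by
  by_cases h : j = l <;> simp [lawsonCoordL_apply, lawsonCoord, h]

lemma hasFDerivAt_lawsonCoord {n : ℕ} (j : Fin n) (z : EuclideanSpace ℝ (Fin n ⊕ Fin n)) :
    HasFDerivAt (lawsonCoord j) (lawsonCoordL j) z := by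
  have h : lawsonCoord j = fun z => lawsonCoordL j z := by
    funext y; rw [lawsonCoordL_apply]
  rw [h]
  exact (lawsonCoordL j).hasFDerivAt

lemma hasFDerivAt_lawsonMon {n : ℕ} (m : Fin n → ℕ) (z : EuclideanSpace ℝ (Fin n ⊕ Fin n)) :
    HasFDerivAt (lawsonMon m) (∑ j, lawsonD m j z • lawsonCoordL j) z := by
  have h := HasFDerivAt.finsetProd (u := Finset.univ) (x := z)
    (fun j _ => (hasFDerivAt_lawsonCoord (n := n) j z).pow (m j))
  refine h.congr_fderiv (Finset.sum_congr rfl fun j _ => ?_)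
  rw [lawsonD, lawsonMon, ← Finset.mul_prod_erase _ _ (Finset.mem_univ j)]
  have h2 : ∏ i ∈ Finset.univ.erase j, lawsonCoord i z ^ lawsonLower m j i
      = ∏ i ∈ Finset.univ.erase j, lawsonCoord i z ^ m i := by
    refine Finset.prod_congr rfl fun i hi => ?_
    rw [lawsonLower, Function.update_of_ne (Finset.ne_of_mem_erase hi)]
  rw [h2]
  ext v
  simp [lawsonLower]
  ring

/-- Directional derivatives of `Im (c · f)` for a monomial `f`. The constant `c` accommodates the
factor left behind by a preceding differentiation in an `x`- or `y`-direction. -/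
lemma fderiv_im_lawsonMon {n : ℕ} (m : Fin n → ℕ) (c : ℂ)
    (z v : EuclideanSpace ℝ (Fin n ⊕ Fin n)) :
    fderiv ℝ (fun y => (c * lawsonMon m y).im) z v
      = (c * ∑ j, lawsonD m j z * lawsonCoordL j v).im := by
  have h := Complex.imCLM.hasFDerivAt.comp z ((hasFDerivAt_lawsonMon m z).const_mul c)
  have h' : HasFDerivAt (fun y => (c * lawsonMon m y).im) _ z := h
  rw [h'.fderiv]
  simp

lemma fderiv_im_inl {n : ℕ} (m : Fin n → ℕ) (c : ℂ)
    (z : EuclideanSpace ℝ (Fin n ⊕ Fin n)) (l : Fin n) :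
    fderiv ℝ (fun y => (c * lawsonMon m y).im) z (EuclideanSpace.single (Sum.inl l) 1)
      = (c * lawsonD m l z).im := by
  rw [fderiv_im_lawsonMon]
  simp only [lawsonCoordL_single_inl, mul_ite, mul_one, mul_zero, Finset.sum_ite_eq',
    Finset.mem_univ, if_true]

lemma fderiv_im_inr {n : ℕ} (m : Fin n → ℕ) (c : ℂ)
    (z : EuclideanSpace ℝ (Fin n ⊕ Fin n)) (l : Fin n) :
    fderiv ℝ (fun y => (c * lawsonMon m y).im) z (EuclideanSpace.single (Sum.inr l) 1)
      = (c * (lawsonD m l z * Complex.I)).im := by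
  rw [fderiv_im_lawsonMon]
  simp only [lawsonCoordL_single_inr, mul_ite, mul_zero, Finset.sum_ite_eq',
    Finset.mem_univ, if_true]

lemma lawsonP_eq {n : ℕ} (k : Fin n → ℕ) :
    LawsonP n k = fun y => (1 * lawsonMon k y).im := by
  funext y; simp [LawsonP, lawsonMon, lawsonCoord]

lemma pd_lawson_inl {n : ℕ} (k : Fin n → ℕ) (z : EuclideanSpace ℝ (Fin n ⊕ Fin n)) (j : Fin n) :
    pd (LawsonP n k) z (Sum.inl j) = ((k j : ℂ) * lawsonMon (lawsonLower k j) z).im := by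
  rw [pd, lawsonP_eq, fderiv_im_inl, one_mul, lawsonD]

lemma pd_lawson_inr {n : ℕ} (k : Fin n → ℕ) (z : EuclideanSpace ℝ (Fin n ⊕ Fin n)) (j : Fin n) :
    pd (LawsonP n k) z (Sum.inr j)
      = (((k j : ℂ) * Complex.I) * lawsonMon (lawsonLower k j) z).im := by
  rw [pd, lawsonP_eq, fderiv_im_inr, one_mul, lawsonD, mul_right_comm]

lemma lap_lawson {n : ℕ} (k : Fin n → ℕ) (z : EuclideanSpace ℝ (Fin n ⊕ Fin n)) :
    lap (LawsonP n k) z = 0 := by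
  rw [lap, Fintype.sum_sum_type, ← Finset.sum_add_distrib]
  refine Finset.sum_eq_zero fun j _ => ?_
  simp only [pd_lawson_inl, pd_lawson_inr, fderiv_im_inl, fderiv_im_inr]
  simp

/-- The four real terms of `Δ_∞P` belonging to a pair of complex coordinates, with
`a = fⱼ`, `b = fₗ`, `h = fⱼₗ`. -/
lemma lawson_infLap_block (a b h : ℂ) :
    a.im * b.im * h.im + a.im * b.re * (h * Complex.I).im
      + (a.re * b.im * (h * Complex.I).im + a.re * b.re * (h * Complex.I * Complex.I).im)
      = -(h * (starRingEnd ℂ a * starRingEnd ℂ b)).im := by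
  simp
  ring

lemma infLap_lawson {n : ℕ} (k : Fin n → ℕ) (z : EuclideanSpace ℝ (Fin n ⊕ Fin n)) :
    infLap (LawsonP n k) z = ∑ j, ∑ l, -(lawsonDD k j l z *
      (starRingEnd ℂ (lawsonD k j z) * starRingEnd ℂ (lawsonD k l z))).im := by
  simp only [infLap, Fintype.sum_sum_type, ← Finset.sum_add_distrib]
  refine Finset.sum_congr rfl fun j _ => Finset.sum_congr rfl fun l _ => ?_
  rw [← lawson_infLap_block]
  simp only [pd_lawson_inl, pd_lawson_inr, fderiv_im_inl, fderiv_im_inr]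
  have e : ∀ i : Fin n, ((k i : ℂ) * Complex.I * lawsonMon (lawsonLower k i) z).im
      = (lawsonD k i z).re := fun i => by simp [lawsonD]
  have e1 : (k j : ℂ) * (lawsonD (lawsonLower k j) l z * Complex.I)
      = lawsonDD k j l z * Complex.I := by rw [lawsonDD]; ring
  have e2 : (k j : ℂ) * Complex.I * lawsonD (lawsonLower k j) l z
      = lawsonDD k j l z * Complex.I := by rw [lawsonDD]; ring
  have e3 : (k j : ℂ) * Complex.I * (lawsonD (lawsonLower k j) l z * Complex.I)
      = lawsonDD k j l z * Complex.I * Complex.I := by rw [lawsonDD]; ring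
  rw [e, e, e1, e2, e3]
  rfl

/-- Euler's relation in one variable: `wⱼ · ∂f/∂wⱼ = mⱼ f`. -/
lemma lawson_euler {n : ℕ} (m : Fin n → ℕ) (j : Fin n)
    (z : EuclideanSpace ℝ (Fin n ⊕ Fin n)) :
    lawsonCoord j z * lawsonD m j z = m j * lawsonMon m z := by
  rcases Nat.eq_zero_or_pos (m j) with h0 | hpos
  · simp [lawsonD, h0]
  · have h2 : ∏ i ∈ Finset.univ.erase j, lawsonCoord i z ^ lawsonLower m j i
        = ∏ i ∈ Finset.univ.erase j, lawsonCoord i z ^ m i := by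
      refine Finset.prod_congr rfl fun i hi => ?_
      rw [lawsonLower, Function.update_of_ne (Finset.ne_of_mem_erase hi)]
    rw [lawsonD, lawsonMon, lawsonMon, ← Finset.mul_prod_erase _ _ (Finset.mem_univ j),
      ← Finset.mul_prod_erase _ (fun i => lawsonCoord i z ^ m i) (Finset.mem_univ j), h2]
    obtain ⟨p, hp⟩ : ∃ p, m j = p + 1 := ⟨m j - 1, by omega⟩
    simp only [lawsonLower, Function.update_self, hp, Nat.add_sub_cancel]
    ring

lemma lawsonMon_eq_zero {n : ℕ} {m : Fin n → ℕ} {i : Fin n}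
    {z : EuclideanSpace ℝ (Fin n ⊕ Fin n)} (hw : lawsonCoord i z = 0) (hm : m i ≠ 0) :
    lawsonMon m z = 0 :=
  Finset.prod_eq_zero (Finset.mem_univ i) (by rw [hw, zero_pow hm])

lemma lawsonD_eq_zero_of_ne {n : ℕ} {k : Fin n → ℕ} (hk : ∀ j, 0 < k j) {i j : Fin n}
    (hij : i ≠ j) {z : EuclideanSpace ℝ (Fin n ⊕ Fin n)} (hw : lawsonCoord i z = 0) :
    lawsonD k j z = 0 := by
  rw [lawsonD, lawsonMon_eq_zero hw, mul_zero]
  rw [lawsonLower, Function.update_of_ne hij]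
  exact Nat.pos_iff_ne_zero.mp (hk i)

/-- On `{Im f = 0}` every product `fⱼₗ · conj fⱼ · conj fₗ` is real. -/
lemma lawson_term_im_eq_zero {n : ℕ} {k : Fin n → ℕ} (hk : ∀ j, 0 < k j)
    {z : EuclideanSpace ℝ (Fin n ⊕ Fin n)} (hz : (lawsonMon k z).im = 0) (j l : Fin n) :
    (lawsonDD k j l z *
      (starRingEnd ℂ (lawsonD k j z) * starRingEnd ℂ (lawsonD k l z))).im = 0 := by
  by_cases hj : lawsonCoord j z = 0
  · by_cases hjl : j = l
    · subst hjl
      -- If `kⱼ = 1` then `fⱼⱼ = 0`; if `kⱼ ≥ 2` then `fⱼ` still contains the factor `wⱼ = 0`.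
      by_cases h1 : k j - 1 = 0
      · simp [lawsonDD, lawsonD, lawsonLower, h1]
      · have : lawsonD k j z = 0 := by
          rw [lawsonD, lawsonMon_eq_zero hj, mul_zero]
          simpa [lawsonLower] using h1
        simp [this]
    · simp [lawsonD_eq_zero_of_ne hk hjl hj]
  by_cases hl : lawsonCoord l z = 0
  · have hlj : l ≠ j := by rintro rfl; exact hj hl
    simp [lawsonD_eq_zero_of_ne hk hlj hl]
  have e1 := lawson_euler k j z
  have e2 := lawson_euler k l z
  have e3 := lawson_euler (lawsonLower k j) l z
  have e4 : lawsonMon (lawsonLower k j) z * k j = lawsonD k j z := by rw [lawsonD, mul_comm]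
  have e5 : lawsonCoord j z * lawsonCoord l z * lawsonDD k j l z
      = (lawsonLower k j l * k j : ℂ) * lawsonMon k z := by
    rw [lawsonDD]
    linear_combination (lawsonCoord j z * k j) * e3
      + (lawsonCoord j z * lawsonLower k j l) * e4 + (lawsonLower k j l : ℂ) * e1
  have c1 := congrArg (starRingEnd ℂ) e1
  have c2 := congrArg (starRingEnd ℂ) e2
  have hconj : starRingEnd ℂ (lawsonMon k z) = lawsonMon k z := Complex.conj_eq_iff_im.mpr hz
  simp only [map_mul, map_natCast, hconj] at c1 c2
  have hf : lawsonMon k z = ((lawsonMon k z).re : ℂ) := by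
    apply Complex.ext <;> simp [hz]
  set r := (lawsonMon k z).re
  rw [hf] at e5 c1 c2
  have key : lawsonDD k j l z *
      (starRingEnd ℂ (lawsonD k j z) * starRingEnd ℂ (lawsonD k l z))
      = ((lawsonLower k j l * k j * k j * k l * r ^ 3
        / (Complex.normSq (lawsonCoord j z) * Complex.normSq (lawsonCoord l z)) : ℝ) : ℂ) := by
    push_cast
    rw [← Complex.mul_conj, ← Complex.mul_conj]
    have hj' : starRingEnd ℂ (lawsonCoord j z) ≠ 0 := by simpa using hj
    have hl' : starRingEnd ℂ (lawsonCoord l z) ≠ 0 := by simpa using hl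
    rw [eq_div_iff (by positivity)]
    calc _ = (lawsonCoord j z * lawsonCoord l z * lawsonDD k j l z)
          * (starRingEnd ℂ (lawsonCoord j z) * starRingEnd ℂ (lawsonD k j z))
          * (starRingEnd ℂ (lawsonCoord l z) * starRingEnd ℂ (lawsonD k l z)) := by ring
      _ = _ := by rw [e5, c1, c2]; ring
  rw [key, Complex.ofReal_im]

/-- Lawson's algebraic minimal cones in `ℝ^{2n}`: for `n ≥ 2` and positive
integers `k₁,…,k_n`, the degree-`(k₁+⋯+k_n)` polynomial
`P = Im((x₁+iy₁)^{k₁} ⋯ (x_n+iy_n)^{k_n})` satisfies `‖∇P‖²·ΔP − Δ_∞P = 0` at every point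
of `{P = 0}` with `∇P ≠ 0`, so `{P = 0}` is an algebraic minimal cone; in particular for
`n = 3`, `k₁ = k₂ = k₃ = 1` the cubic cone
`{y₁x₂x₃ + x₁y₂x₃ + x₁x₂y₃ − y₁y₂y₃ = 0}` is minimal in `ℝ⁶`. -/
theorem lawson_cones_R2n_minimal :
    (∀ (n : ℕ), 2 ≤ n → ∀ k : Fin n → ℕ, (∀ j, 0 < k j) →
      ∀ z : EuclideanSpace ℝ (Fin n ⊕ Fin n), LawsonP n k z = 0 →
        (∃ i, pd (LawsonP n k) z i ≠ 0) →
        gradSq (LawsonP n k) z * lap (LawsonP n k) z - infLap (LawsonP n k) z = 0) ∧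
    (∀ z : EuclideanSpace ℝ (Fin 3 ⊕ Fin 3),
      z (Sum.inr 0) * z (Sum.inl 1) * z (Sum.inl 2) +
          z (Sum.inl 0) * z (Sum.inr 1) * z (Sum.inl 2) +
          z (Sum.inl 0) * z (Sum.inl 1) * z (Sum.inr 2) -
          z (Sum.inr 0) * z (Sum.inr 1) * z (Sum.inr 2) = 0 →
      (∃ i, pd (fun w : EuclideanSpace ℝ (Fin 3 ⊕ Fin 3) =>
          w (Sum.inr 0) * w (Sum.inl 1) * w (Sum.inl 2) +
            w (Sum.inl 0) * w (Sum.inr 1) * w (Sum.inl 2) +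
            w (Sum.inl 0) * w (Sum.inl 1) * w (Sum.inr 2) -
            w (Sum.inr 0) * w (Sum.inr 1) * w (Sum.inr 2)) z i ≠ 0) →
      gradSq (fun w : EuclideanSpace ℝ (Fin 3 ⊕ Fin 3) =>
          w (Sum.inr 0) * w (Sum.inl 1) * w (Sum.inl 2) +
            w (Sum.inl 0) * w (Sum.inr 1) * w (Sum.inl 2) +
            w (Sum.inl 0) * w (Sum.inl 1) * w (Sum.inr 2) -
            w (Sum.inr 0) * w (Sum.inr 1) * w (Sum.inr 2)) z *
        lap (fun w : EuclideanSpace ℝ (Fin 3 ⊕ Fin 3) =>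
          w (Sum.inr 0) * w (Sum.inl 1) * w (Sum.inl 2) +
            w (Sum.inl 0) * w (Sum.inr 1) * w (Sum.inl 2) +
            w (Sum.inl 0) * w (Sum.inl 1) * w (Sum.inr 2) -
            w (Sum.inr 0) * w (Sum.inr 1) * w (Sum.inr 2)) z -
        infLap (fun w : EuclideanSpace ℝ (Fin 3 ⊕ Fin 3) =>
          w (Sum.inr 0) * w (Sum.inl 1) * w (Sum.inl 2) +
            w (Sum.inl 0) * w (Sum.inr 1) * w (Sum.inl 2) +
            w (Sum.inl 0) * w (Sum.inl 1) * w (Sum.inr 2) -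
            w (Sum.inr 0) * w (Sum.inr 1) * w (Sum.inr 2)) z = 0) := by
  have main : ∀ (n : ℕ) (k : Fin n → ℕ), (∀ j, 0 < k j) →
      ∀ z : EuclideanSpace ℝ (Fin n ⊕ Fin n), LawsonP n k z = 0 →
        gradSq (LawsonP n k) z * lap (LawsonP n k) z - infLap (LawsonP n k) z = 0 := by
    intro n k hk z hz
    have hz' : (lawsonMon k z).im = 0 := by simpa [lawsonP_eq] using hz
    rw [lap_lawson, infLap_lawson]
    simp [lawson_term_im_eq_zero hk hz', -Complex.mul_im]
  refine ⟨fun n _ k hk z hz _ => main n k hk z hz, fun z hz _ => ?_⟩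
  have hP : (fun w : EuclideanSpace ℝ (Fin 3 ⊕ Fin 3) =>
      w (Sum.inr 0) * w (Sum.inl 1) * w (Sum.inl 2) +
        w (Sum.inl 0) * w (Sum.inr 1) * w (Sum.inl 2) +
        w (Sum.inl 0) * w (Sum.inl 1) * w (Sum.inr 2) -
        w (Sum.inr 0) * w (Sum.inr 1) * w (Sum.inr 2)) = LawsonP 3 (fun _ => 1) := by
    funext w
    simp [LawsonP, Fin.prod_univ_three]
    ring
  rw [hP]
  exact main 3 _ (fun _ => one_pos) z ((congrFun hP z).symm.trans hz)
end
end
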